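/- Let k → A → H → B → k be an exact sequence of cosemisimple Hopf algebras. For right H-comodules V and W there is a natural isomorphism hom^B(V,W) ≅ hom^H(V, W⊗A), where on the left V and W are corestricted to B-comodules along H → B, and W⊗A carries the tensor-product right H-comodule structure (A being a subcomodule algebra of H). -/

import Mathlib

/- Common infrastructure: right comodules over coalgebras, simplicity,
cosemisimplicity, subcoalgebras, adjoint coactions, normality, etc. -/

open TensorProduct

universe u

namespace QG

variable (k : Type u) [Field k]

section Coalg

variable (C : Type u) [AddCommGroup C] [Module k C] [Coalgebra k C]

/-- `ρ : V →ₗ[k] V ⊗[k] C` is a (coassociative, counital) right coaction. -/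
structure IsComod {V : Type u} [AddCommGroup V] [Module k V]
    (ρ : V →ₗ[k] V ⊗[k] C) : Prop where
  coassoc : ∀ v : V, ρ.rTensor C (ρ v) =
    (TensorProduct.assoc k V C C).symm.toLinearMap
      ((Coalgebra.comul (R := k) (A := C)).lTensor V (ρ v))
  counit : ∀ v : V, (TensorProduct.rid k V)
      ((Coalgebra.counit (R := k) (A := C)).lTensor V (ρ v)) = v

/-- A submodule `U ≤ V` is a subcomodule if the coaction restricts to it,
i.e. maps `U` into the image of `U ⊗ C` in `V ⊗ C`. -/
def IsSubcomod {V : Type u} [AddCommGroup V] [Module k V]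
    (ρ : V →ₗ[k] V ⊗[k] C) (U : Submodule k V) : Prop :=
  ∀ u ∈ U, ρ u ∈ LinearMap.range ((U.subtype).rTensor C)

/-- A simple subcomodule: a nonzero subcomodule with no nonzero proper
subcomodules below it. -/
def IsSimpleSubcomod {V : Type u} [AddCommGroup V] [Module k V]
    (ρ : V →ₗ[k] V ⊗[k] C) (U : Submodule k V) : Prop :=
  IsSubcomod k C ρ U ∧ U ≠ ⊥ ∧
    ∀ U' : Submodule k V, U' ≤ U → IsSubcomod k C ρ U' → U' = ⊥ ∨ U' = U

/-- A comodule is simple if it is simple as a subcomodule of itself. -/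
def IsSimpleComod {V : Type u} [AddCommGroup V] [Module k V]
    (ρ : V →ₗ[k] V ⊗[k] C) : Prop :=
  IsSimpleSubcomod k C ρ ⊤

/-- Morphisms of right `C`-comodules. -/
def IsComodHom {V W : Type u} [AddCommGroup V] [Module k V]
    [AddCommGroup W] [Module k W]
    (ρV : V →ₗ[k] V ⊗[k] C) (ρW : W →ₗ[k] W ⊗[k] C) (f : V →ₗ[k] W) : Prop :=
  ρW ∘ₗ f = (f.rTensor C) ∘ₗ ρV

/-- `C` is cosemisimple: every right `C`-comodule is an (internal) direct sum
of simple subcomodules. -/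
def IsCosemisimple : Prop :=
  ∀ (V : Type u) [AddCommGroup V] [Module k V]
    (ρ : V →ₗ[k] V ⊗[k] C), IsComod k C ρ →
    ∃ (ι : Type u) (U : ι → Submodule k V),
      (∀ i, IsSimpleSubcomod k C ρ (U i)) ∧
      iSupIndep U ∧ (⨆ i, U i) = ⊤

/-- Subcoalgebras of `C`, as submodules. -/
def IsSubcoalgebra (D : Submodule k C) : Prop :=
  ∀ x ∈ D, Coalgebra.comul (R := k) x ∈
    LinearMap.range (TensorProduct.map D.subtype D.subtype)

/-- Simple subcoalgebras: nonzero ones with no nonzero proper subcoalgebras. -/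
def IsSimpleSubcoalgebra (D : Submodule k C) : Prop :=
  IsSubcoalgebra k C D ∧ D ≠ ⊥ ∧
    ∀ D' : Submodule k C, D' ≤ D → IsSubcoalgebra k C D' → D' = ⊥ ∨ D' = D

/-- The coefficient space of a comodule: the smallest submodule `D ≤ C` such
that the coaction factors through `V ⊗ D`.  For a simple comodule this is its
coefficient coalgebra. -/
def coeffSpace {V : Type u} [AddCommGroup V] [Module k V]
    (ρ : V →ₗ[k] V ⊗[k] C) : Submodule k C :=
  sInf {D : Submodule k C | ∀ v : V, ρ v ∈ LinearMap.range ((D.subtype).lTensor V)}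

/-- Corestriction of a coaction along a linear map of coalgebras `π : C → D`. -/
noncomputable def cores {D : Type u} [AddCommGroup D] [Module k D]
    {V : Type u} [AddCommGroup V] [Module k V]
    (π : C →ₗ[k] D) (ρ : V →ₗ[k] V ⊗[k] C) : V →ₗ[k] V ⊗[k] D :=
  (π.lTensor V) ∘ₗ ρ

end Coalg

section Bialg

variable (H : Type u) [Ring H] [Bialgebra k H]

/-- An invariant vector for a coaction of a bialgebra. -/
def IsInvariant {V : Type u} [AddCommGroup V] [Module k V]
    (ρ : V →ₗ[k] V ⊗[k] H) (v : V) : Prop :=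
  ρ v = v ⊗ₜ[k] (1 : H)

/-- The tensor product coaction on `V ⊗ W` for a bialgebra `H`:
`v ⊗ w ↦ (v₀ ⊗ w₀) ⊗ v₁w₁`. -/
noncomputable def tensorCoact {V W : Type u}
    [AddCommGroup V] [Module k V] [AddCommGroup W] [Module k W]
    (ρV : V →ₗ[k] V ⊗[k] H) (ρW : W →ₗ[k] W ⊗[k] H) :
    (V ⊗[k] W) →ₗ[k] (V ⊗[k] W) ⊗[k] H :=
  ((LinearMap.mul' k H).lTensor (V ⊗[k] W)) ∘ₗ
    (TensorProduct.tensorTensorTensorComm k V H W H).toLinearMap ∘ₗ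
    (TensorProduct.map ρV ρW)

/-- `O(G/H)`: the right coinvariants `{x | (id ⊗ π)Δ(x) = x ⊗ 1}` of a
quotient map `π`. -/
noncomputable def quotientSpaceLeft {B : Type u} [AddCommGroup B] [Module k B] [One B]
    (π : H →ₗ[k] B) : Submodule k H :=
  LinearMap.ker ((π.lTensor H) ∘ₗ (Coalgebra.comul (R := k) (A := H)) -
    (TensorProduct.mk k H B).flip 1)

/-- `O(H\G)`: the left coinvariants `{x | (π ⊗ id)Δ(x) = 1 ⊗ x}`. -/
noncomputable def quotientSpaceRight {B : Type u} [AddCommGroup B] [Module k B] [One B]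
    (π : H →ₗ[k] B) : Submodule k H :=
  LinearMap.ker ((π.rTensor H) ∘ₗ (Coalgebra.comul (R := k) (A := H)) -
    (TensorProduct.mk k B H) 1)

end Bialg

section Hopf

variable (H : Type u) [Ring H] [HopfAlgebra k H]

/-- Iterated comultiplication `x ↦ x₁ ⊗ (x₂ ⊗ x₃)`. -/
noncomputable def comul2 : H →ₗ[k] H ⊗[k] (H ⊗[k] H) :=
  ((Coalgebra.comul (R := k) (A := H)).lTensor H) ∘ₗ (Coalgebra.comul (R := k) (A := H))

/-- The right adjoint coaction `x ↦ x₂ ⊗ S(x₁)x₃`. -/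
noncomputable def adR : H →ₗ[k] H ⊗[k] H :=
  ((LinearMap.mul' k H).lTensor H) ∘ₗ
    (TensorProduct.assoc k H H H).toLinearMap ∘ₗ
    (((TensorProduct.comm k H H).toLinearMap).rTensor H) ∘ₗ
    (TensorProduct.assoc k H H H).symm.toLinearMap ∘ₗ
    ((HopfAlgebra.antipode (R := k) (A := H)).rTensor (H ⊗[k] H)) ∘ₗ
    comul2 k H

/-- The left adjoint coaction `x ↦ x₁S(x₃) ⊗ x₂` (a left coaction, with the
coacting tensorand on the left). -/
noncomputable def adL : H →ₗ[k] H ⊗[k] H :=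
  ((LinearMap.mul' k H).rTensor H) ∘ₗ
    (TensorProduct.assoc k H H H).symm.toLinearMap ∘ₗ
    (((TensorProduct.comm k H H).toLinearMap).lTensor H) ∘ₗ
    (((HopfAlgebra.antipode (R := k) (A := H)).lTensor H).lTensor H) ∘ₗ
    comul2 k H

variable {B : Type u} [AddCommGroup B] [Module k B]

/-- `π : O(G) → O(H)` is right-normal: it is a morphism of right
`O(G)`-comodules for the right adjoint coaction, i.e. the right adjoint
coaction descends along `π`. -/
def IsRightNormal (π : H →ₗ[k] B) : Prop :=
  ∃ ρ : B →ₗ[k] B ⊗[k] H, ρ ∘ₗ π = (π.rTensor H) ∘ₗ adR k H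

/-- `π : O(G) → O(H)` is left-normal: the left adjoint coaction descends
along `π`. -/
def IsLeftNormal (π : H →ₗ[k] B) : Prop :=
  ∃ lam : B →ₗ[k] H ⊗[k] B, lam ∘ₗ π = (π.lTensor H) ∘ₗ adL k H

end Hopf

end QG

namespace QG

variable (k : Type u) [Field k]

section Coalg2

variable (C : Type u) [AddCommGroup C] [Module k C] [Coalgebra k C]

/-- A bundled simple right `C`-comodule. -/
structure SimpleComodule where
  V : Type u
  [addCommGroup : AddCommGroup V]
  [module : Module k V]
  ρ : V →ₗ[k] V ⊗[k] C
  isComod : IsComod k C ρ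
  isSimple : IsSimpleComod k C ρ

attribute [instance] SimpleComodule.addCommGroup SimpleComodule.module

/-- A simple comodule `(T, ρT)` is a constituent of a comodule `(V, ρV)`
(over a cosemisimple coalgebra) iff there is a nonzero comodule map `T → V`. -/
def IsConstituent {T V : Type u} [AddCommGroup T] [Module k T]
    [AddCommGroup V] [Module k V]
    (ρT : T →ₗ[k] T ⊗[k] C) (ρV : V →ₗ[k] V ⊗[k] C) : Prop :=
  ∃ f : T →ₗ[k] V, f ≠ 0 ∧ IsComodHom k C ρT ρV f

/-- Isomorphism of (simple) comodules. -/
def comodIsoRel (X Y : SimpleComodule k C) : Prop :=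
  ∃ e : X.V ≃ₗ[k] Y.V, IsComodHom k C X.ρ Y.ρ e.toLinearMap

/-- The set `Ĉ` of isomorphism classes of simple right `C`-comodules. -/
def SimpleComodQuot := Quot (comodIsoRel k C)

/-- The isomorphism class of a simple comodule. -/
def SimpleComodule.cls (X : SimpleComodule k C) : SimpleComodQuot k C :=
  Quot.mk _ X

/-- Group-like elements of a coalgebra; these correspond to the
one-dimensional comodules, i.e. to characters. -/
def IsGroupLike (a : C) : Prop :=
  Coalgebra.counit (R := k) (A := C) a = (1 : k) ∧
    Coalgebra.comul (R := k) (A := C) a = a ⊗ₜ[k] a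

/-- A linear map `φ : C → Z` out of a coalgebra is central if
`φ(x₁) ⊗ x₂ = φ(x₂) ⊗ x₁`. -/
def IsCentralMap {Z : Type u} [AddCommGroup Z] [Module k Z] (φ : C →ₗ[k] Z) : Prop :=
  (φ.rTensor C) ∘ₗ (Coalgebra.comul (R := k) (A := C)) =
    (φ.rTensor C) ∘ₗ (TensorProduct.comm k C C).toLinearMap ∘ₗ
      (Coalgebra.comul (R := k) (A := C))

/-- The simple comodule `X` has "central character" `g` with respect to the
quotient map `γ : C → Z`: corestricted along `γ`, the coaction on `X` is a sum
of copies of the character `g`. -/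
def HasCentralChar {Z : Type u} [AddCommGroup Z] [Module k Z]
    (γ : C →ₗ[k] Z) (X : SimpleComodule k C) (g : Z) : Prop :=
  ∀ v : X.V, cores k C γ X.ρ v = v ⊗ₜ[k] g

end Coalg2

/-- The k-span of the set of products `g * a`, `a ∈ Am`; for `Am` a submodule
this is the left ideal generated by `Am`. -/
def leftIdealGen {G : Type u} [Ring G] [Module k G] (Am : Submodule k G) :
    Submodule k G :=
  Submodule.span k {x : G | ∃ g : G, ∃ a ∈ Am, x = g * a}

end QG

namespace QG

variable (k : Type u) [Field k]
variable {H : Type u} [Ring H] [HopfAlgebra k H]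
variable {V W : Type u} [AddCommGroup V] [Module k V] [AddCommGroup W] [Module k W]

/-- The canonical map `hom^H(V, W ⊗ H) → hom(V, W)`, `f ↦ (id_W ⊗ ε) ∘ f`;
restricted to maps landing in `W ⊗ A` it implements the adjunction
`hom^B(V, W) ≅ hom^H(V, W ⊗ A)`. -/
noncomputable def counitProj (f : V →ₗ[k] W ⊗[k] H) : V →ₗ[k] W :=
  (TensorProduct.rid k W).toLinearMap ∘ₗ
    ((Coalgebra.counit (R := k) (A := H)).lTensor W) ∘ₗ f

end QG

/-
Twisting `w ⊗ h ↦ w₀ ⊗ w₁h` is an isomorphism from `W ⊗ H` with the diagonal coaction onto the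
cofree comodule `W ⊗ H`, and it leaves `id ⊗ ε` unchanged; so colinear maps `V → W ⊗ H` are the
same as linear maps `V → W`. The twist carries `W ⊗ ᶜᵒᴮH`, with `ᶜᵒᴮH` the left coinvariants of
`H → B`, onto the cotensor product `W □_B H`, and a colinear map into the latter is the same as a
`B`-colinear map `V → W`. It remains to see that `ᶜᵒᴮH` is `A`, the right coinvariants. An
invariant functional `χ` on the cosemisimple `B` gives the right `A`-linear projection
`E(h) = h₁χ(π(h₂))` of `H` onto `A`. Then `h ↦ E(h₁)S(h₂)` kills `HA⁻`, so it factors through `π`;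
therefore `E(x) = E(x₁)S(x₂)x₃` equals `x` whenever `π(x₁) ⊗ x₂ = 1 ⊗ x`.
-/

namespace QG

open Coalgebra WithConv

section Comodule

variable {k : Type u} [Field k] {C : Type u} [AddCommGroup C] [Module k C]
variable {V : Type u} [AddCommGroup V] [Module k V] {ρ : V →ₗ[k] V ⊗[k] C}

theorem IsSubcomod.iSup {I : Sort*} {U : I → Submodule k V}
    (hU : ∀ i, IsSubcomod k C ρ (U i)) : IsSubcomod k C ρ (⨆ i, U i) := by
  have map_le (i : I) : U i ≤ (LinearMap.range ((⨆ j, U j).subtype.rTensor C)).comap ρ := by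
    intro u hu
    obtain ⟨t, ht⟩ := hU i u hu
    refine ⟨(Submodule.inclusion (le_iSup U i)).rTensor C t, ?_⟩
    rw [← LinearMap.rTensor_comp_apply, Submodule.subtype_comp_inclusion, ht]
  exact iSup_le map_le

theorem IsSubcomod.isComodHom_projection {L N : Submodule k V} (hL : IsSubcomod k C ρ L)
    (hN : IsSubcomod k C ρ N) (h : IsCompl L N) :
    IsComodHom k C ρ ρ (Submodule.projection L N h) := by
  have on_L {u : V} (hu : u ∈ L) : (Submodule.projection L N h).rTensor C (ρ u) = ρ u := by
    obtain ⟨t, ht⟩ := hL u hu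
    have : Submodule.projection L N h ∘ₗ L.subtype = L.subtype := by ext; simp
    rw [← ht, ← LinearMap.rTensor_comp_apply, this]
  have on_N {u : V} (hu : u ∈ N) : (Submodule.projection L N h).rTensor C (ρ u) = 0 := by
    obtain ⟨t, ht⟩ := hN u hu
    have : Submodule.projection L N h ∘ₗ N.subtype = 0 := by
      ext u; simp
    rw [← ht, ← LinearMap.rTensor_comp_apply, this, LinearMap.rTensor_zero, LinearMap.zero_apply]
  ext v
  obtain ⟨a, ha, b, hb, rfl⟩ := Submodule.mem_sup.1 (h.sup_eq_top ▸ Submodule.mem_top : v ∈ L ⊔ N)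
  simp only [LinearMap.comp_apply, map_add, on_L ha, on_N hb,
    Submodule.projection_apply_of_mem_left h ha, Submodule.projection_apply_of_mem_right h hb,
    map_zero]

theorem IsComodHom.comp_iff {W U : Type u} [AddCommGroup W] [Module k W] [AddCommGroup U]
    [Module k U] {ρW : W →ₗ[k] W ⊗[k] C} {ρU : U →ₗ[k] U ⊗[k] C} {e : W →ₗ[k] U}
    (he : IsComodHom k C ρW ρU e) (inj : Function.Injective e) {f : V →ₗ[k] W} :
    IsComodHom k C ρ ρU (e ∘ₗ f) ↔ IsComodHom k C ρ ρW f := by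
  have rTensor_inj : Function.Injective (e.rTensor C) :=
    Module.Flat.rTensor_preserves_injective_linearMap e inj
  unfold IsComodHom at he ⊢
  rw [← LinearMap.comp_assoc, he, LinearMap.rTensor_comp, LinearMap.comp_assoc,
    LinearMap.comp_assoc, LinearMap.cancel_left rTensor_inj]

variable [Coalgebra k C]

theorem isComod_comul : IsComod k C (comul (R := k) (A := C)) where
  coassoc a := by simp
  counit a := by simp

theorem IsComod.assoc_map_cores (hρ : IsComod k C ρ) {D E : Type u} [AddCommGroup D]
    [Module k D] [AddCommGroup E] [Module k E] (α : C →ₗ[k] D) (β : C →ₗ[k] E) (v : V) :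
    TensorProduct.assoc k V D E (TensorProduct.map (cores k C α ρ) β (ρ v)) =
      (TensorProduct.map α β ∘ₗ comul).lTensor V (ρ v) := by
  have assoc_map : (TensorProduct.assoc k V D E).toLinearMap ∘ₗ
      TensorProduct.map (α.lTensor V) β ∘ₗ (TensorProduct.assoc k V C C).symm.toLinearMap =
      (TensorProduct.map α β).lTensor V := by
    ext; simp
  rw [cores, LinearMap.lTensor_comp_apply, ← assoc_map]
  simp only [LinearMap.comp_apply, ← hρ.coassoc, LinearEquiv.coe_coe]
  rw [LinearMap.map_rTensor]

end Comodule

section Invariant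

variable {k : Type u} [Field k] {C : Type u} [Ring C] [Bialgebra k C]
variable {V : Type u} [AddCommGroup V] [Module k V] {ρ : V →ₗ[k] V ⊗[k] C}

theorem IsInvariant.isSubcomod_span {u : V} (hu : IsInvariant k C ρ u) :
    IsSubcomod k C ρ (k ∙ u) := by
  rintro _ hw
  obtain ⟨c, rfl⟩ := Submodule.mem_span_singleton.1 hw
  refine ⟨⟨c • u, hw⟩ ⊗ₜ 1, ?_⟩
  rw [map_smul, hu, LinearMap.rTensor_tmul, TensorProduct.smul_tmul']
  rfl

theorem IsSimpleSubcomod.eq_span_of_isInvariant {U : Submodule k V}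
    (hU : IsSimpleSubcomod k C ρ U) {u : V} (hu : IsInvariant k C ρ u) (huU : u ∈ U)
    (hu0 : u ≠ 0) : U = k ∙ u := by
  have span_le : k ∙ u ≤ U := by simpa using huU
  rcases hU.2.2 _ span_le hu.isSubcomod_span with h | h
  · exact absurd (Submodule.span_singleton_eq_bot.1 h) hu0
  · exact h.symm

theorem IsComodHom.isInvariant {W : Type u} [AddCommGroup W] [Module k W]
    {ρW : W →ₗ[k] W ⊗[k] C} {f : V →ₗ[k] W} (hf : IsComodHom k C ρ ρW f) {v : V}
    (hv : IsInvariant k C ρ v) : IsInvariant k C ρW (f v) := by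
  have := LinearMap.congr_fun hf v
  rwa [LinearMap.comp_apply, LinearMap.comp_apply, hv, LinearMap.rTensor_tmul] at this

theorem IsCosemisimple.exists_simple_projection_ne_zero (hC : IsCosemisimple k C)
    (hρ : IsComod k C ρ) {v : V} (hv : v ≠ 0) :
    ∃ (U : Submodule k V) (p : V →ₗ[k] V), IsSimpleSubcomod k C ρ U ∧
      IsComodHom k C ρ ρ p ∧ (∀ w, p w ∈ U) ∧ p v ≠ 0 := by
  obtain ⟨I, U, hU, hind, htop⟩ := hC V ρ hρ
  obtain ⟨f, hfU, hfv⟩ := (Submodule.mem_iSup_iff_exists_finsupp U v).1 (htop ▸ Submodule.mem_top)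
  obtain ⟨i, hi⟩ : ∃ i, f i ≠ 0 := by
    by_contra! hf
    exact hv (by rw [← hfv]; simp [Finsupp.sum, hf])
  have hcompl : IsCompl (U i) (⨆ (j) (_ : j ≠ i), U j) := by
    refine ⟨hind i, codisjoint_iff.2 (eq_top_iff.2 (htop ▸ iSup_le fun j => ?_))⟩
    by_cases hj : j = i
    · exact hj ▸ le_sup_left
    · exact (le_iSup₂ (f := fun j (_ : j ≠ i) => U j) j hj).trans le_sup_right
  have hrest : v - f i ∈ ⨆ (j) (_ : j ≠ i), U j := by
    rw [← hfv, ← Finsupp.add_sum_erase' f i (fun _ x => x) fun _ => rfl, add_sub_cancel_left]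
    refine Submodule.sum_mem _ fun j hj => ?_
    have hji : j ≠ i := Finsupp.mem_support_iff.1 hj ∘ fun h => h ▸ Finsupp.erase_same
    rw [Finsupp.erase_ne hji]
    exact le_iSup₂ (f := fun j (_ : j ≠ i) => U j) j hji (hfU j)
  refine ⟨U i, Submodule.projection _ _ hcompl, hU i,
    (hU i).1.isComodHom_projection (.iSup fun j => .iSup fun _ => (hU j).1) hcompl,
    Submodule.projection_apply_mem hcompl, ?_⟩
  rwa [← add_sub_cancel (f i) v, map_add, Submodule.projection_apply_of_mem_left hcompl (hfU i),
    Submodule.projection_apply_of_mem_right hcompl hrest, add_zero]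

theorem IsCosemisimple.exists_dual_of_isInvariant (hC : IsCosemisimple k C)
    (hρ : IsComod k C ρ) {v : V} (hinv : IsInvariant k C ρ v) (hv : v ≠ 0) :
    ∃ χ : V →ₗ[k] k, χ v = 1 ∧ IsComodHom k C ρ ((TensorProduct.mk k k C).flip 1) χ := by
  obtain ⟨U, p, hU, hp, hpU, hpv⟩ := hC.exists_simple_projection_ne_zero hρ hv
  have hspan := hU.eq_span_of_isInvariant (hp.isInvariant hinv) (hpU v) hpv
  obtain ⟨ξ, hξ⟩ := Module.Projective.exists_dual_eq_one k hpv
  refine ⟨ξ ∘ₗ p, hξ, ?_⟩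
  ext w
  obtain ⟨c, hc⟩ := Submodule.mem_span_singleton.1 (hspan ▸ hpU w)
  calc ξ (p w) ⊗ₜ[k] (1 : C) = ξ.rTensor C (p w ⊗ₜ 1) := rfl
    _ = ξ.rTensor C (ρ (p w)) := by
        rw [← hc, map_smul, hp.isInvariant hinv, TensorProduct.smul_tmul']
    _ = (ξ ∘ₗ p).rTensor C (ρ w) := by
        rw [LinearMap.rTensor_comp_apply]; exact congrArg _ (LinearMap.congr_fun hp w)

end Invariant

section Convolution

variable {R : Type*} [CommRing R] {C : Type*} [AddCommGroup C] [Module R C]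
  {D : Type*} [Ring D] [Algebra R D]

variable (D) in
/-- The linear functional `χ`, viewed as an element of the convolution algebra `Hom(C, D)` of an
arbitrary algebra `D`. -/
noncomputable def scalarConv (χ : C →ₗ[R] R) : WithConv (C →ₗ[R] D) :=
  toConv (Algebra.linearMap R D ∘ₗ χ)

theorem ofConv_scalarConv_apply (χ : C →ₗ[R] R) (c : C) :
    (scalarConv D χ).ofConv c = algebraMap R D (χ c) := rfl

theorem algHom_comp_scalarConv {D' : Type*} [Ring D'] [Algebra R D'] (φ : D →ₐ[R] D')
    (χ : C →ₗ[R] R) : φ.toLinearMap ∘ₗ (scalarConv D χ).ofConv = (scalarConv D' χ).ofConv := by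
  ext c
  simp [ofConv_scalarConv_apply]

variable [Coalgebra R C]

theorem algHom_comp_mul_scalarConv {D' : Type*} [Ring D'] [Algebra R D'] (φ : D →ₐ[R] D')
    (f : WithConv (C →ₗ[R] D)) (χ : C →ₗ[R] R) :
    φ.toLinearMap ∘ₗ (f * scalarConv D χ).ofConv =
      (toConv (φ.toLinearMap ∘ₗ f.ofConv) * scalarConv D' χ).ofConv := by
  rw [LinearMap.algHom_comp_convMul_distrib, algHom_comp_scalarConv, toConv_ofConv]

theorem toConv_map_comp_comul {D' : Type*} [Ring D'] [Algebra R D'] (f : C →ₗ[R] D)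
    (g : C →ₗ[R] D') :
    toConv (TensorProduct.map f g ∘ₗ comul) =
      toConv (Algebra.TensorProduct.includeLeft.toLinearMap ∘ₗ f : C →ₗ[R] D ⊗[R] D') *
        toConv (Algebra.TensorProduct.includeRight.toLinearMap ∘ₗ g) := by
  ext x
  rw [(ℛ R x).convMul_apply]
  simp [← (ℛ R x).eq]

end Convolution

section Antipode

variable {R : Type*} [CommRing R] {H : Type*} [Ring H] [HopfAlgebra R H]
  {D : Type*} [Ring D] [Algebra R D]

theorem toConv_mul_toConv_comp_antipode (φ : H →ₐ[R] D) :
    toConv φ.toLinearMap * toConv (φ.toLinearMap ∘ₗ HopfAlgebra.antipode R) = 1 := by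
  have := LinearMap.algHom_comp_convMul_distrib φ (toConv (LinearMap.id (R := R) (M := H)))
    (toConv (HopfAlgebra.antipode R))
  rw [LinearMap.id_mul_antipode] at this
  refine ofConv_injective ((this.symm.trans ?_))
  ext; simp

theorem toConv_comp_antipode_mul_toConv (φ : H →ₐ[R] D) :
    toConv (φ.toLinearMap ∘ₗ HopfAlgebra.antipode R) * toConv φ.toLinearMap = 1 := by
  have := LinearMap.algHom_comp_convMul_distrib φ (toConv (HopfAlgebra.antipode R))
    (toConv (LinearMap.id (R := R) (M := H)))
  rw [LinearMap.antipode_mul_id] at this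
  refine ofConv_injective ((this.symm.trans ?_))
  ext; simp

theorem comul_antipode (a : H) :
    comul (HopfAlgebra.antipode R a) = TensorProduct.comm R H H
      (TensorProduct.map (HopfAlgebra.antipode R) (HopfAlgebra.antipode R) (comul a)) := by
  let i₁ : H →ₐ[R] H ⊗[R] H := Algebra.TensorProduct.includeLeft
  let i₂ : H →ₐ[R] H ⊗[R] H := Algebra.TensorProduct.includeRight
  have comul_eq : toConv comul = toConv i₁.toLinearMap * toConv i₂.toLinearMap := by
    simpa only [TensorProduct.map_id, LinearMap.id_comp, LinearMap.comp_id] using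
      toConv_map_comp_comul (LinearMap.id (R := R) (M := H)) LinearMap.id
  have inv : toConv (i₂.toLinearMap ∘ₗ HopfAlgebra.antipode R) *
      toConv (i₁.toLinearMap ∘ₗ HopfAlgebra.antipode R) =
      toConv (comul ∘ₗ HopfAlgebra.antipode R) := by
    refine left_inv_eq_right_inv ?_ LinearMap.comul_right_inv
    rw [comul_eq, mul_assoc, ← mul_assoc (toConv (i₁.toLinearMap ∘ₗ _)),
      toConv_comp_antipode_mul_toConv, one_mul, toConv_comp_antipode_mul_toConv]
  have := LinearMap.congr_fun (congrArg ofConv inv.symm) a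
  rw [(ℛ R a).convMul_apply] at this
  simpa [← (ℛ R a).eq, i₁, i₂] using this

theorem id_mul_scalarConv_comp_antipode {χ : H →ₗ[R] R}
    (hχ : (TensorProduct.mk R R H).flip 1 ∘ₗ χ = χ.rTensor H ∘ₗ comul) :
    toConv LinearMap.id * scalarConv H (χ ∘ₗ HopfAlgebra.antipode R) =
      scalarConv H (χ ∘ₗ HopfAlgebra.antipode R) := by
  have absorb : toConv (HopfAlgebra.antipode R) * scalarConv H (χ ∘ₗ HopfAlgebra.antipode R) =
      scalarConv H (χ ∘ₗ HopfAlgebra.antipode R) := by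
    ext a
    have := congrArg (TensorProduct.lid R H) (LinearMap.congr_fun hχ (HopfAlgebra.antipode R a))
    rw [LinearMap.comp_apply, LinearMap.comp_apply, comul_antipode, ← (ℛ R a).eq] at this
    rw [(ℛ R a).convMul_apply]
    simpa [ofConv_scalarConv_apply, Algebra.algebraMap_eq_smul_one] using this.symm
  calc toConv LinearMap.id * scalarConv H (χ ∘ₗ HopfAlgebra.antipode R)
      = toConv LinearMap.id * (toConv (HopfAlgebra.antipode R) *
          scalarConv H (χ ∘ₗ HopfAlgebra.antipode R)) := by rw [absorb]
    _ = scalarConv H (χ ∘ₗ HopfAlgebra.antipode R) := by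
        rw [← mul_assoc, LinearMap.id_mul_antipode, one_mul]

theorem IsCosemisimple.exists_scalarConv_invariant {k B : Type u} [Field k] [Ring B]
    [HopfAlgebra k B] (hB : IsCosemisimple k B) :
    ∃ χ : B →ₗ[k] k, χ 1 = 1 ∧ toConv LinearMap.id * scalarConv B χ = scalarConv B χ := by
  have one_ne_zero : (1 : B) ≠ 0 := fun h => by
    simpa using congrArg (counit (R := k)) h
  obtain ⟨χ, hχ1, hχ⟩ := hB.exists_dual_of_isInvariant isComod_comul Bialgebra.comul_one one_ne_zero
  exact ⟨χ ∘ₗ HopfAlgebra.antipode k, by simp [hχ1], id_mul_scalarConv_comp_antipode hχ⟩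

end Antipode

section Averaging

variable {k A H B : Type u} [Field k] [Ring A] [Bialgebra k A] [Ring H] [Bialgebra k H]
  [Ring B] [Bialgebra k B]

/-- Averaging along `π : H → B` against a functional `χ` on `B`: the map `h ↦ h₁ χ(π(h₂))`. -/
noncomputable def average (π : H →ₗ[k] B) (χ : B →ₗ[k] k) : H →ₗ[k] H :=
  (toConv LinearMap.id * scalarConv H (χ ∘ₗ π)).ofConv

theorem average_mem_quotientSpaceLeft (π : H →ₐc[k] B) {χ : B →ₗ[k] k}
    (hχ : toConv LinearMap.id * scalarConv B χ = scalarConv B χ) (h : H) :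
    average (π : H →ₗ[k] B) χ h ∈ quotientSpaceLeft k H (π : H →ₗ[k] B) := by
  let j₁ : H →ₐ[k] H ⊗[k] B := Algebra.TensorProduct.includeLeft
  let j₂ : B →ₐ[k] H ⊗[k] B := Algebra.TensorProduct.includeRight
  let π' : H →ₗ[k] B := π
  let ψ : H →ₐ[k] H ⊗[k] B :=
    (Algebra.TensorProduct.map (AlgHom.id k H) (π : H →ₐ[k] B)).comp (Bialgebra.comulAlgHom k H)
  have ψ_eq : toConv ψ.toLinearMap = toConv j₁.toLinearMap * toConv (j₂.toLinearMap ∘ₗ π') := by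
    have := toConv_map_comp_comul (LinearMap.id (R := k) (M := H)) π'
    rw [LinearMap.comp_id] at this
    exact this
  have absorb : toConv (j₂.toLinearMap ∘ₗ π') * scalarConv (H ⊗[k] B) (χ ∘ₗ π') =
      scalarConv (H ⊗[k] B) (χ ∘ₗ π') := by
    have absorb_B : toConv j₂.toLinearMap * scalarConv (H ⊗[k] B) χ = scalarConv (H ⊗[k] B) χ := by
      have := algHom_comp_mul_scalarConv j₂ (toConv LinearMap.id) χ
      rw [hχ, algHom_comp_scalarConv] at this
      exact ofConv_injective this.symm
    have := LinearMap.convMul_comp_coalgHom_distrib (toConv j₂.toLinearMap)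
      (scalarConv (H ⊗[k] B) χ) (π : H →ₗc[k] B)
    rw [absorb_B] at this
    exact ofConv_injective this.symm
  have key : ψ.toLinearMap ∘ₗ average π' χ = j₁.toLinearMap ∘ₗ average π' χ := by
    rw [average, algHom_comp_mul_scalarConv, algHom_comp_mul_scalarConv, ofConv_toConv,
      LinearMap.comp_id, LinearMap.comp_id, ψ_eq, mul_assoc, absorb]
  exact LinearMap.mem_ker.2 (sub_eq_zero.2 (LinearMap.congr_fun key h))

theorem average_one (π : H →ₐc[k] B) {χ : B →ₗ[k] k} (hχ : χ 1 = 1) :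
    average (π : H →ₗ[k] B) χ 1 = 1 := by
  simp [average, LinearMap.convMul_apply, ofConv_scalarConv_apply, hχ,
    Algebra.TensorProduct.one_def]

theorem convMul_apply_mul_map {D : Type*} [Ring D] [Algebra k D]
    (ι : A →ₐc[k] H) (f g : WithConv (H →ₗ[k] D)) (h : H) (a : A) :
    (f * g).ofConv (h * ι a) = ∑ i ∈ (ℛ k h).index, ∑ j ∈ (ℛ k a).index,
      f.ofConv ((ℛ k h).left i * ι ((ℛ k a).left j)) *
        g.ofConv ((ℛ k h).right i * ι ((ℛ k a).right j)) := by
  rw [((ℛ k h).mul ((ℛ k a).induced ι)).convMul_apply]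
  exact Finset.sum_product ..

theorem average_mul_map (ι : A →ₐc[k] H) (π : H →ₐc[k] B)
    (hπι : ∀ a, π (ι a) = algebraMap k B (counit a)) (χ : B →ₗ[k] k) (h : H) (a : A) :
    average (π : H →ₗ[k] B) χ (h * ι a) = average (π : H →ₗ[k] B) χ h * ι a := by
  have counit_smul : ∑ j ∈ (ℛ k a).index, counit (R := k) ((ℛ k a).right j) • ι ((ℛ k a).left j) =
      ι a := by
    have := congrArg (ι ∘ TensorProduct.rid k A) (sum_tmul_counit_eq (ℛ k a))
    simpa [-sum_tmul_counit_eq] using this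
  rw [average, convMul_apply_mul_map, (ℛ k h).convMul_apply, Finset.sum_mul]
  refine Finset.sum_congr rfl fun i _ => ?_
  conv_rhs => rw [← counit_smul, Finset.mul_sum]
  refine Finset.sum_congr rfl fun j _ => ?_
  simp [ofConv_scalarConv_apply, hπι, Algebra.algebraMap_eq_smul_one, smul_smul]

theorem map_apply_eq_counit {ι : A →ₐc[k] H} {π : H →ₐc[k] B}
    (hπ : LinearMap.ker (π : H →ₗ[k] B) =
      leftIdealGen k (LinearMap.range (ι : A →ₗ[k] H) ⊓
        LinearMap.ker (Coalgebra.counit (R := k) (A := H)))) (a : A) :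
    π (ι a) = algebraMap k B (counit a) := by
  have mem_ker : ι (a - algebraMap k A (counit a)) ∈ LinearMap.ker (π : H →ₗ[k] B) := by
    rw [hπ]
    exact Submodule.subset_span ⟨1, _, ⟨⟨_, rfl⟩, by simp [Algebra.algebraMap_eq_smul_one]⟩,
      (one_mul _).symm⟩
  have : π (ι a) - π (ι (algebraMap k A (counit a))) = 0 := by simpa using mem_ker
  simpa [sub_eq_zero, Algebra.algebraMap_eq_smul_one] using this

theorem leftIdealGen_le_ker {M : Type*} [AddCommGroup M] [Module k M] {ι : A →ₐc[k] H}
    {t : H →ₗ[k] M} (ht : ∀ h a, t (h * ι a) = counit (R := k) a • t h) :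
    leftIdealGen k (LinearMap.range (ι : A →ₗ[k] H) ⊓
        LinearMap.ker (Coalgebra.counit (R := k) (A := H))) ≤ LinearMap.ker t := by
  refine Submodule.span_le.2 ?_
  rintro _ ⟨g, _, ⟨⟨a, rfl⟩, ha⟩, rfl⟩
  have counit_a : counit (R := k) a = 0 := by simpa using ha
  exact (ht g a).trans (by rw [counit_a, zero_smul])

theorem mul_id_apply_of_mem_quotientSpaceRight {M : Type u} [AddCommGroup M]
    [Module k M] [One M] {π : H →ₗ[k] M} {t : H →ₗ[k] H}
    (ht : LinearMap.ker π ≤ LinearMap.ker t) (hπ1 : π 1 = 1) (ht1 : t 1 = 1) {x : H}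
    (hx : x ∈ quotientSpaceRight k H π) :
    (toConv t * toConv LinearMap.id).ofConv x = x := by
  obtain ⟨s, rfl⟩ : ∃ s : M →ₗ[k] H, s ∘ₗ π = t := by
    obtain ⟨s, hs⟩ := LinearMap.exists_extend
      (π.ker.liftQ t ht ∘ₗ π.quotKerEquivRange.symm.toLinearMap)
    refine ⟨s, LinearMap.ext fun h => ?_⟩
    simpa using LinearMap.congr_fun hs (π.quotKerEquivRange (Submodule.Quotient.mk h))
  have hx' : π.rTensor H (comul x) = 1 ⊗ₜ x := sub_eq_zero.1 hx
  have : (s ∘ₗ π).rTensor H (comul x) = 1 ⊗ₜ x := by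
    rw [LinearMap.rTensor_comp_apply, hx', LinearMap.rTensor_tmul]
    exact congrArg (· ⊗ₜ x) (hπ1 ▸ ht1)
  rw [LinearMap.convMul_apply]
  exact (congrArg (LinearMap.mul' k H) this).trans (by simp)

theorem range_le_quotientSpaceRight {ι : A →ₐc[k] H} {π : H →ₐc[k] B}
    (hπι : ∀ a, π (ι a) = algebraMap k B (counit a)) :
    LinearMap.range (ι : A →ₗ[k] H) ≤ quotientSpaceRight k H (π : H →ₗ[k] B) := by
  rintro _ ⟨a, rfl⟩
  refine LinearMap.mem_ker.2 (sub_eq_zero.2 ?_)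
  have πι : (π : H →ₗ[k] B) ∘ₗ (ι : A →ₗ[k] H) = Algebra.linearMap k B ∘ₗ counit :=
    LinearMap.ext hπι
  calc (π : H →ₗ[k] B).rTensor H (comul (ι a))
      = (π : H →ₗ[k] B).rTensor H
          (TensorProduct.map (ι : A →ₗ[k] H) (ι : A →ₗ[k] H) (comul a)) :=
        congrArg _ (CoalgHomClass.map_comp_comul_apply ι a).symm
    _ = TensorProduct.map (Algebra.linearMap k B) (ι : A →ₗ[k] H)
          (counit.rTensor A (comul a)) := by
        rw [LinearMap.rTensor_map, πι, LinearMap.map_rTensor]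
    _ = 1 ⊗ₜ ι a := by
        rw [rTensor_counit_comul, TensorProduct.map_tmul, Algebra.linearMap_apply, map_one]; rfl

end Averaging

section Coinvariants

variable {k A H B : Type u} [Field k] [Ring A] [Bialgebra k A] [Ring H] [HopfAlgebra k H]
  [Ring B] [HopfAlgebra k B]

theorem mul_antipode_mul_map (ι : A →ₐc[k] H)
    {E : H →ₗ[k] H} (hE : ∀ h a, E (h * ι a) = E h * ι a) (h : H) (a : A) :
    (toConv E * toConv (HopfAlgebra.antipode k)).ofConv (h * ι a) =
      counit (R := k) a • (toConv E * toConv (HopfAlgebra.antipode k)).ofConv h := by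
  have antipode_cancel : ∑ j ∈ (ℛ k a).index,
      ι ((ℛ k a).left j) * HopfAlgebra.antipode k (ι ((ℛ k a).right j)) =
      algebraMap k H (counit a) := by
    simpa using HopfAlgebra.sum_mul_antipode_eq_algebraMap_counit ((ℛ k a).induced ι)
  rw [convMul_apply_mul_map, (ℛ k h).convMul_apply, Finset.smul_sum]
  refine Finset.sum_congr rfl fun i _ => ?_
  calc
    ∑ j ∈ (ℛ k a).index, E ((ℛ k h).left i * ι ((ℛ k a).left j)) *
          HopfAlgebra.antipode k ((ℛ k h).right i * ι ((ℛ k a).right j))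
      = ∑ j ∈ (ℛ k a).index, E ((ℛ k h).left i) * (ι ((ℛ k a).left j) *
          HopfAlgebra.antipode k (ι ((ℛ k a).right j))) *
          HopfAlgebra.antipode k ((ℛ k h).right i) := by
        simp only [hE, HopfAlgebra.antipode_mul_antidistrib, mul_assoc]
    _ = counit (R := k) a • (E ((ℛ k h).left i) * HopfAlgebra.antipode k ((ℛ k h).right i)) := by
        rw [← Finset.sum_mul, ← Finset.mul_sum, antipode_cancel, ← Algebra.commutes, mul_assoc,
          Algebra.smul_def]

theorem quotientSpaceRight_le_quotientSpaceLeft {ι : A →ₐc[k] H} {π : H →ₐc[k] B}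
    (hπ : LinearMap.ker (π : H →ₗ[k] B) =
      leftIdealGen k (LinearMap.range (ι : A →ₗ[k] H) ⊓
        LinearMap.ker (Coalgebra.counit (R := k) (A := H))))
    (hB : IsCosemisimple k B) :
    quotientSpaceRight k H (π : H →ₗ[k] B) ≤ quotientSpaceLeft k H (π : H →ₗ[k] B) := by
  intro x hx
  obtain ⟨χ, hχ1, hχ⟩ := hB.exists_scalarConv_invariant
  let E := average (π : H →ₗ[k] B) χ
  let t := (toConv E * toConv (HopfAlgebra.antipode k)).ofConv
  have t_mul (h : H) (a : A) : t (h * ι a) = counit (R := k) a • t h :=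
    mul_antipode_mul_map ι (average_mul_map ι π (map_apply_eq_counit hπ) χ) h a
  have t_one : t 1 = 1 := by
    simp [t, E, LinearMap.convMul_apply, Algebra.TensorProduct.one_def, average_one π hχ1]
  have t_mul_id : toConv t * toConv LinearMap.id = toConv E := by
    rw [toConv_ofConv, mul_assoc, LinearMap.antipode_mul_id, mul_one]
  have E_x : E x = x := by
    have := mul_id_apply_of_mem_quotientSpaceRight (hπ ▸ leftIdealGen_le_ker t_mul)
      (map_one π) t_one hx
    rwa [t_mul_id] at this
  rw [← E_x]
  exact average_mem_quotientSpaceLeft π hχ x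

theorem quotientSpaceRight_eq_range {ι : A →ₐc[k] H} {π : H →ₐc[k] B}
    (hι : LinearMap.range (ι : A →ₗ[k] H) = quotientSpaceLeft k H (π : H →ₗ[k] B))
    (hπ : LinearMap.ker (π : H →ₗ[k] B) =
      leftIdealGen k (LinearMap.range (ι : A →ₗ[k] H) ⊓
        LinearMap.ker (Coalgebra.counit (R := k) (A := H))))
    (hB : IsCosemisimple k B) :
    quotientSpaceRight k H (π : H →ₗ[k] B) = LinearMap.range (ι : A →ₗ[k] H) :=
  le_antisymm (hι ▸ quotientSpaceRight_le_quotientSpaceLeft hπ hB)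
    (range_le_quotientSpaceRight (map_apply_eq_counit hπ))

end Coinvariants

section Cofree

variable {k H : Type u} [Field k] [Ring H] [HopfAlgebra k H]
variable {V W : Type u} [AddCommGroup V] [Module k V] [AddCommGroup W] [Module k W]
  {ρ : V →ₗ[k] V ⊗[k] H}

theorem counitProj_rTensor_comp (hρ : IsComod k H ρ) (g : V →ₗ[k] W) :
    counitProj k (g.rTensor H ∘ₗ ρ) = g := by
  have rid_map : (TensorProduct.rid k W).toLinearMap ∘ₗ g.rTensor k =
      g ∘ₗ (TensorProduct.rid k V).toLinearMap := by
    ext; simp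
  ext v
  calc TensorProduct.rid k W ((counit (R := k) (A := H)).lTensor W (g.rTensor H (ρ v)))
      = TensorProduct.rid k W (g.rTensor k ((counit (R := k) (A := H)).lTensor V (ρ v))) := by
        rw [← LinearMap.comp_apply, LinearMap.lTensor_comp_rTensor,
          ← LinearMap.rTensor_comp_lTensor]
        rfl
    _ = g v := by
        conv_rhs => rw [← hρ.counit v]
        exact LinearMap.congr_fun rid_map _

theorem rTensor_comp_coact_inj (hρ : IsComod k H ρ) {g g' : V →ₗ[k] W} :
    g.rTensor H ∘ₗ ρ = g'.rTensor H ∘ₗ ρ ↔ g = g' :=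
  ⟨fun h => by rw [← counitProj_rTensor_comp hρ g, h, counitProj_rTensor_comp hρ],
    fun h => h ▸ rfl⟩

variable (k H W) in
/-- The coaction `id ⊗ Δ` of the cofree comodule `W ⊗ H`. -/
noncomputable def cofreeCoact : W ⊗[k] H →ₗ[k] (W ⊗[k] H) ⊗[k] H :=
  (TensorProduct.assoc k W H H).symm.toLinearMap ∘ₗ comul.lTensor W

theorem rTensor_counitProj_comp_cofreeCoact :
    (counitProj k (LinearMap.id (M := W ⊗[k] H))).rTensor H ∘ₗ cofreeCoact k H W =
      LinearMap.id := by
  have rTensor_assoc_symm : (counitProj k (LinearMap.id (M := W ⊗[k] H))).rTensor H ∘ₗ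
      (TensorProduct.assoc k W H H).symm.toLinearMap =
      (TensorProduct.lid k H ∘ₗ (counit (R := k) (A := H)).rTensor H).lTensor W := by
    ext; simp [counitProj, TensorProduct.smul_tmul]
  rw [cofreeCoact, ← LinearMap.comp_assoc, rTensor_assoc_symm, ← LinearMap.lTensor_comp,
    LinearMap.comp_assoc, rTensor_counit_comp_comul]
  ext; simp

theorem isComodHom_cofreeCoact_rTensor_comp (hρ : IsComod k H ρ) (g : V →ₗ[k] W) :
    IsComodHom k H ρ (cofreeCoact k H W) (g.rTensor H ∘ₗ ρ) := by
  have assoc_symm_rTensor : (TensorProduct.assoc k W H H).symm.toLinearMap ∘ₗ g.rTensor (H ⊗[k] H) =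
      (g.rTensor H).rTensor H ∘ₗ (TensorProduct.assoc k V H H).symm.toLinearMap := by
    ext; simp
  have coassoc : ρ.rTensor H ∘ₗ ρ = (TensorProduct.assoc k V H H).symm.toLinearMap ∘ₗ
      comul.lTensor V ∘ₗ ρ := LinearMap.ext hρ.coassoc
  calc cofreeCoact k H W ∘ₗ g.rTensor H ∘ₗ ρ
      = (TensorProduct.assoc k W H H).symm.toLinearMap ∘ₗ g.rTensor (H ⊗[k] H) ∘ₗ
        comul.lTensor V ∘ₗ ρ := by
        rw [cofreeCoact, LinearMap.comp_assoc, ← LinearMap.comp_assoc _ _ (comul.lTensor W),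
          LinearMap.lTensor_comp_rTensor, ← LinearMap.rTensor_comp_lTensor, LinearMap.comp_assoc]
    _ = (g.rTensor H).rTensor H ∘ₗ ρ.rTensor H ∘ₗ ρ := by
        rw [← LinearMap.comp_assoc, assoc_symm_rTensor, coassoc, LinearMap.comp_assoc]
    _ = (g.rTensor H ∘ₗ ρ).rTensor H ∘ₗ ρ := by
        rw [LinearMap.rTensor_comp, LinearMap.comp_assoc]

theorem isComodHom_cofreeCoact_iff (hρ : IsComod k H ρ) {F : V →ₗ[k] W ⊗[k] H} {g : V →ₗ[k] W} :
    IsComodHom k H ρ (cofreeCoact k H W) F ∧ counitProj k F = g ↔ F = g.rTensor H ∘ₗ ρ := by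
  constructor
  · rintro ⟨hF, rfl⟩
    calc F = (counitProj k (LinearMap.id (M := W ⊗[k] H))).rTensor H ∘ₗ cofreeCoact k H W ∘ₗ F := by
          rw [← LinearMap.comp_assoc, rTensor_counitProj_comp_cofreeCoact, LinearMap.id_comp]
      _ = (counitProj k F).rTensor H ∘ₗ ρ := by
          rw [hF, ← LinearMap.comp_assoc, ← LinearMap.rTensor_comp]; rfl
  · rintro rfl
    exact ⟨isComodHom_cofreeCoact_rTensor_comp hρ g, counitProj_rTensor_comp hρ g⟩

end Cofree

section Twist

variable {k C : Type u} [Field k] [AddCommGroup C] [Module k C]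
variable {W : Type u} [AddCommGroup W] [Module k W] {ρ : W →ₗ[k] W ⊗[k] C}
variable {D E : Type u} [Ring D] [Algebra k D] [Ring E] [Algebra k E]

/-- The twist of `W ⊗ D` by a linear map `α : C → D` into an algebra, `w ⊗ d ↦ w₀ ⊗ α(w₁) d`. -/
noncomputable def twist (ρ : W →ₗ[k] W ⊗[k] C) (α : C →ₗ[k] D) : W ⊗[k] D →ₗ[k] W ⊗[k] D :=
  (LinearMap.mul' k D).lTensor W ∘ₗ (TensorProduct.assoc k W D D).toLinearMap ∘ₗ
    (cores k C α ρ).rTensor D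

theorem twist_tmul (α : C →ₗ[k] D) (w : W) (d : D) :
    twist ρ α (w ⊗ₜ d) = (LinearMap.mulRight k d ∘ₗ α).lTensor W (ρ w) := by
  have mul_assoc_tmul : (LinearMap.mul' k D).lTensor W ∘ₗ
      (TensorProduct.assoc k W D D).toLinearMap ∘ₗ (TensorProduct.mk k (W ⊗[k] D) D).flip d =
      (LinearMap.mulRight k d).lTensor W := by
    ext; simp
  rw [LinearMap.lTensor_comp_apply, ← mul_assoc_tmul]
  rfl

theorem lTensor_twist (φ : D →ₐ[k] E) (α : C →ₗ[k] D) (y : W ⊗[k] D) :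
    φ.toLinearMap.lTensor W (twist ρ α y) =
      twist ρ (φ.toLinearMap ∘ₗ α) (φ.toLinearMap.lTensor W y) := by
  induction y with
  | zero => simp only [map_zero]
  | add y z hy hz => simp only [map_add, hy, hz]
  | tmul w d =>
    rw [LinearMap.lTensor_tmul, twist_tmul, twist_tmul, ← LinearMap.lTensor_comp_apply]
    congr 2
    ext h
    simp

variable [Coalgebra k C]

theorem twist_lTensor_coact (hρ : IsComod k C ρ) (α β : C →ₗ[k] D) (w : W) :
    twist ρ α (β.lTensor W (ρ w)) = (toConv α * toConv β).ofConv.lTensor W (ρ w) := by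
  have : (cores k C α ρ).rTensor D (β.lTensor W (ρ w)) =
      TensorProduct.map (cores k C α ρ) β (ρ w) :=
    LinearMap.congr_fun (LinearMap.rTensor_comp_lTensor ..) _
  rw [twist, LinearMap.comp_apply, LinearMap.comp_apply, this, LinearEquiv.coe_coe,
    hρ.assoc_map_cores, ← LinearMap.lTensor_comp_apply]
  rfl

theorem twist_twist (hρ : IsComod k C ρ) (α β : C →ₗ[k] D) (y : W ⊗[k] D) :
    twist ρ α (twist ρ β y) = twist ρ (toConv α * toConv β).ofConv y := by
  induction y with
  | zero => simp only [map_zero]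
  | add y z hy hz => simp only [map_add, hy, hz]
  | tmul w d =>
    rw [twist_tmul, twist_tmul, twist_lTensor_coact hρ]
    congr 2
    ext h
    simp [(ℛ k h).convMul_apply, mul_assoc]

theorem twist_counit (hρ : IsComod k C ρ) :
    twist ρ (Algebra.linearMap k D ∘ₗ counit) = LinearMap.id := by
  ext w d
  have mul_smul_one : (LinearMap.mulRight k d ∘ₗ Algebra.linearMap k D).lTensor W =
      (TensorProduct.mk k W D).flip d ∘ₗ (TensorProduct.rid k W).toLinearMap := by
    ext; simp
  simp only [TensorProduct.AlgebraTensorModule.curry_apply, TensorProduct.curry_apply,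
    LinearMap.coe_restrictScalars, LinearMap.id_apply]
  rw [twist_tmul, ← LinearMap.comp_assoc, LinearMap.lTensor_comp_apply, mul_smul_one]
  exact congrArg (· ⊗ₜ d) (hρ.counit w)

end Twist

section HopfTwist

variable {k H : Type u} [Field k] [Ring H] [HopfAlgebra k H]
variable {W : Type u} [AddCommGroup W] [Module k W] {ρ : W →ₗ[k] W ⊗[k] H}

/-- Twisting by an algebra map `φ : H → D` as an automorphism of `W ⊗ D`; its inverse is the twist
by `φ ∘ S`. -/
noncomputable def twistEquiv (hρ : IsComod k H ρ) {D : Type u} [Ring D] [Algebra k D]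
    (φ : H →ₐ[k] D) : W ⊗[k] D ≃ₗ[k] W ⊗[k] D :=
  LinearEquiv.ofLinearMap (twist ρ φ.toLinearMap)
    (twist ρ (φ.toLinearMap ∘ₗ HopfAlgebra.antipode k))
    (LinearMap.ext fun y => by
      rw [LinearMap.comp_apply, twist_twist hρ, toConv_mul_toConv_comp_antipode]
      exact LinearMap.congr_fun (twist_counit hρ) y)
    (LinearMap.ext fun y => by
      rw [LinearMap.comp_apply, twist_twist hρ, toConv_comp_antipode_mul_toConv]
      exact LinearMap.congr_fun (twist_counit hρ) y)

theorem counitProj_twist_comp (hρ : IsComod k H ρ) {V : Type u} [AddCommGroup V]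
    [Module k V] (f : V →ₗ[k] W ⊗[k] H) :
    counitProj k (twist ρ LinearMap.id ∘ₗ f) = counitProj k f := by
  ext v
  refine congrArg (TensorProduct.rid k W) ?_
  exact (lTensor_twist (Bialgebra.counitAlgHom k H) LinearMap.id (f v)).trans
    (LinearMap.congr_fun (twist_counit hρ) _)

theorem rTensor_twist_tensorTensorTensorComm (hρ : IsComod k H ρ) (w : W) (s : H ⊗[k] H) :
    (twist ρ LinearMap.id).rTensor H ((LinearMap.mul' k H).lTensor (W ⊗[k] H)
        (TensorProduct.tensorTensorTensorComm k W H H H (ρ w ⊗ₜ s))) =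
      (TensorProduct.assoc k W H H).symm ((LinearMap.mulRight k s ∘ₗ comul).lTensor W (ρ w)) := by
  induction s with
  | zero => simp
  | add s t hs ht =>
    have mulRight_add : LinearMap.mulRight k (s + t) =
        LinearMap.mulRight k s + LinearMap.mulRight k t :=
      LinearMap.ext fun x => mul_add x s t
    simp only [TensorProduct.tmul_add, map_add, hs, ht, mulRight_add, LinearMap.add_comp,
      LinearMap.lTensor_add, LinearMap.add_apply]
  | tmul p q =>
    have twist_shuffle (t : W ⊗[k] H) : (twist ρ LinearMap.id).rTensor H
        ((LinearMap.mul' k H).lTensor (W ⊗[k] H)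
          (TensorProduct.tensorTensorTensorComm k W H H H (t ⊗ₜ (p ⊗ₜ q)))) =
        TensorProduct.map (cores k H (LinearMap.mulRight k p) ρ) (LinearMap.mulRight k q) t := by
      induction t with
      | zero => simp
      | add s t hs ht => simp only [TensorProduct.add_tmul, map_add, hs, ht]
      | tmul w a => simp [twist_tmul, cores]
    have mulRight_tmul : LinearMap.mulRight k (p ⊗ₜ[k] q) =
        TensorProduct.map (LinearMap.mulRight k p) (LinearMap.mulRight k q) := by
      ext; simp
    rw [twist_shuffle, mulRight_tmul, LinearEquiv.eq_symm_apply, hρ.assoc_map_cores]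

theorem isComodHom_twist (hρ : IsComod k H ρ) :
    IsComodHom k H (tensorCoact k H ρ comul) (cofreeCoact k H W) (twist ρ LinearMap.id) := by
  refine TensorProduct.ext' fun w h => ?_
  have comul_mulRight : comul ∘ₗ LinearMap.mulRight k h =
      LinearMap.mulRight k (comul h) ∘ₗ comul := by
    ext; simp
  calc cofreeCoact k H W (twist ρ LinearMap.id (w ⊗ₜ h))
      = (TensorProduct.assoc k W H H).symm
          ((comul ∘ₗ LinearMap.mulRight k h).lTensor W (ρ w)) := by
        rw [twist_tmul, LinearMap.comp_id, LinearMap.lTensor_comp_apply]; rfl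
    _ = (twist ρ LinearMap.id).rTensor H (tensorCoact k H ρ comul (w ⊗ₜ h)) := by
        rw [comul_mulRight, ← rTensor_twist_tensorTensorTensorComm hρ]; rfl

end HopfTwist

section Cotensor

variable {k H B : Type u} [Field k] [Ring H] [HopfAlgebra k H] [Ring B] [Bialgebra k B]
variable {V W : Type u} [AddCommGroup V] [Module k V] [AddCommGroup W] [Module k W]
  {ρV : V →ₗ[k] V ⊗[k] H} {ρW : W →ₗ[k] W ⊗[k] H} {π : H →ₐc[k] B}

/-- The left coaction `h ↦ π(h₁) ⊗ h₂` of `B` on `H`, as an algebra map. -/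
noncomputable def leftCoact (π : H →ₐc[k] B) : H →ₐ[k] B ⊗[k] H :=
  (Algebra.TensorProduct.map (π : H →ₐ[k] B) (AlgHom.id k H)).comp (Bialgebra.comulAlgHom k H)

theorem leftCoact_toLinearMap : (leftCoact π).toLinearMap = (π : H →ₗ[k] B).rTensor H ∘ₗ comul :=
  rfl

/-- The cotensor product `W □_B H`, the equalizer in `W ⊗ H` of the coactions of `B` on `W` and
on `H`. -/
noncomputable def cotensor (π : H →ₐc[k] B) (ρ : W →ₗ[k] W ⊗[k] H) : Submodule k (W ⊗[k] H) :=
  LinearMap.eqLocus ((leftCoact π).toLinearMap.lTensor W)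
    ((TensorProduct.assoc k W B H).toLinearMap ∘ₗ (cores k H (π : H →ₗ[k] B) ρ).rTensor H)

theorem twist_leftCoact_one_tmul (hρ : IsComod k H ρW) (y : W ⊗[k] H) :
    twist ρW (leftCoact π).toLinearMap ((TensorProduct.mk k B H 1).lTensor W y) =
      TensorProduct.assoc k W B H
        ((cores k H (π : H →ₗ[k] B) ρW).rTensor H (twist ρW LinearMap.id y)) := by
  induction y with
  | zero => simp only [map_zero]
  | add y z hy hz => simp only [map_add, hy, hz]
  | tmul w h =>
    have mulRight_one_tmul : LinearMap.mulRight k ((1 : B) ⊗ₜ[k] h) ∘ₗ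
        (π : H →ₗ[k] B).rTensor H = TensorProduct.map (π : H →ₗ[k] B) (LinearMap.mulRight k h) := by
      ext; simp
    rw [LinearMap.lTensor_tmul, TensorProduct.mk_apply, twist_tmul, twist_tmul, LinearMap.comp_id,
      leftCoact_toLinearMap, ← LinearMap.comp_assoc, mulRight_one_tmul, ← hρ.assoc_map_cores,
      ← LinearMap.rTensor_comp_lTensor]
    rfl

theorem twist_mem_cotensor_iff (hρ : IsComod k H ρW) {y : W ⊗[k] H} :
    twist ρW LinearMap.id y ∈ cotensor π ρW ↔
      y ∈ LinearMap.range ((quotientSpaceRight k H (π : H →ₗ[k] B)).subtype.lTensor W) := by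
  have coinvariants_exact := Module.Flat.lTensor_exact W
    (LinearMap.exact_subtype_ker_map ((leftCoact π).toLinearMap - TensorProduct.mk k B H 1))
  calc twist ρW LinearMap.id y ∈ cotensor π ρW
      ↔ twist ρW (leftCoact π).toLinearMap ((leftCoact π).toLinearMap.lTensor W y) =
          twist ρW (leftCoact π).toLinearMap ((TensorProduct.mk k B H 1).lTensor W y) := by
        rw [twist_leftCoact_one_tmul hρ, cotensor, LinearMap.mem_eqLocus, lTensor_twist]
        rfl
    _ ↔ (leftCoact π).toLinearMap.lTensor W y = (TensorProduct.mk k B H 1).lTensor W y :=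
        (twistEquiv hρ (leftCoact π)).injective.eq_iff
    _ ↔ ((leftCoact π).toLinearMap - TensorProduct.mk k B H 1).lTensor W y = 0 := by
        rw [LinearMap.lTensor_sub, LinearMap.sub_apply, sub_eq_zero]
    _ ↔ _ := coinvariants_exact y

theorem rTensor_coact_mem_cotensor_iff (hV : IsComod k H ρV) {g : V →ₗ[k] W} :
    (∀ v, g.rTensor H (ρV v) ∈ cotensor π ρW) ↔
      IsComodHom k B (cores k H (π : H →ₗ[k] B) ρV) (cores k H (π : H →ₗ[k] B) ρW) g := by
  have lTensor_leftCoact (v : V) :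
      (leftCoact π).toLinearMap.lTensor W (g.rTensor H (ρV v)) = TensorProduct.assoc k W B H
        ((g.rTensor B ∘ₗ cores k H (π : H →ₗ[k] B) ρV).rTensor H (ρV v)) := by
    have assoc_rTensor : (TensorProduct.assoc k W B H).toLinearMap ∘ₗ (g.rTensor B).rTensor H =
        g.rTensor (B ⊗[k] H) ∘ₗ (TensorProduct.assoc k V B H).toLinearMap := by
      ext; simp
    calc (leftCoact π).toLinearMap.lTensor W (g.rTensor H (ρV v))
        = g.rTensor (B ⊗[k] H) ((leftCoact π).toLinearMap.lTensor V (ρV v)) := by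
          rw [← LinearMap.comp_apply, LinearMap.lTensor_comp_rTensor,
            ← LinearMap.rTensor_comp_lTensor, LinearMap.comp_apply]
      _ = g.rTensor (B ⊗[k] H) (TensorProduct.assoc k V B H
            ((cores k H (π : H →ₗ[k] B) ρV).rTensor H (ρV v))) :=
          congrArg _ (hV.assoc_map_cores (π : H →ₗ[k] B) LinearMap.id v).symm
      _ = _ := by
          rw [LinearMap.rTensor_comp_apply]
          exact (LinearMap.congr_fun assoc_rTensor _).symm
  calc (∀ v, g.rTensor H (ρV v) ∈ cotensor π ρW)
      ↔ (g.rTensor B ∘ₗ cores k H (π : H →ₗ[k] B) ρV).rTensor H ∘ₗ ρV =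
          (cores k H (π : H →ₗ[k] B) ρW ∘ₗ g).rTensor H ∘ₗ ρV := by
        simp only [cotensor, LinearMap.mem_eqLocus, lTensor_leftCoact, LinearMap.ext_iff,
          LinearMap.comp_apply, LinearMap.rTensor_comp_apply, LinearEquiv.coe_coe,
          EmbeddingLike.apply_eq_iff_eq]
    _ ↔ _ := (rTensor_comp_coact_inj hV).trans eq_comm

theorem isComodHom_tensorCoact_iff (hV : IsComod k H ρV) (hW : IsComod k H ρW)
    {f : V →ₗ[k] W ⊗[k] H} {g : V →ₗ[k] W} :
    IsComodHom k H ρV (tensorCoact k H ρW comul) f ∧ counitProj k f = g ↔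
      twist ρW LinearMap.id ∘ₗ f = g.rTensor H ∘ₗ ρV := by
  rw [← isComodHom_cofreeCoact_iff hV, (isComodHom_twist hW).comp_iff
    (twistEquiv hW (AlgHom.id k H)).injective, counitProj_twist_comp hW]

theorem existsUnique_isComodHom_tensorCoact (hV : IsComod k H ρV) (hW : IsComod k H ρW)
    (g : V →ₗ[k] W) :
    ∃! f, IsComodHom k H ρV (tensorCoact k H ρW comul) f ∧ counitProj k f = g := by
  simp only [isComodHom_tensorCoact_iff hV hW]
  refine ⟨(twistEquiv hW (AlgHom.id k H)).symm ∘ₗ g.rTensor H ∘ₗ ρV, ?_, fun f hf => ?_⟩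
  · ext v
    exact (twistEquiv hW (AlgHom.id k H)).apply_symm_apply _
  · ext v
    exact (LinearEquiv.eq_symm_apply _).2 (LinearMap.congr_fun hf v)

theorem mem_range_iff_isComodHom_cores (hV : IsComod k H ρV) (hW : IsComod k H ρW)
    {f : V →ₗ[k] W ⊗[k] H} (hf : IsComodHom k H ρV (tensorCoact k H ρW comul) f) :
    (∀ v, f v ∈ LinearMap.range ((quotientSpaceRight k H (π : H →ₗ[k] B)).subtype.lTensor W)) ↔
      IsComodHom k B (cores k H (π : H →ₗ[k] B) ρV) (cores k H (π : H →ₗ[k] B) ρW)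
        (counitProj k f) := by
  have twist_f (v : V) : twist ρW LinearMap.id (f v) = (counitProj k f).rTensor H (ρV v) :=
    LinearMap.congr_fun ((isComodHom_tensorCoact_iff hV hW).1 ⟨hf, rfl⟩) v
  simp only [← twist_mem_cotensor_iff hW, twist_f, rTensor_coact_mem_cotensor_iff hV]

end Cotensor

end QG

open QG in
theorem statement_10_general (k : Type u) [Field k]
    (A H B : Type u) [Ring A] [Bialgebra k A] [Ring H] [HopfAlgebra k H]
    [Ring B] [HopfAlgebra k B]
    (ι : A →ₐc[k] H) (π : H →ₐc[k] B)
    (hexactA : LinearMap.range (ι : A →ₗ[k] H) =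
      quotientSpaceLeft k H (π : H →ₗ[k] B))
    (hexactB : LinearMap.ker (π : H →ₗ[k] B) =
      leftIdealGen k (LinearMap.range (ι : A →ₗ[k] H) ⊓
        LinearMap.ker (Coalgebra.counit (R := k) (A := H))))
    (hcssB : IsCosemisimple k B)
    (V W : Type u) [AddCommGroup V] [Module k V] [AddCommGroup W] [Module k W]
    (ρV : V →ₗ[k] V ⊗[k] H) (ρW : W →ₗ[k] W ⊗[k] H)
    (hV : IsComod k H ρV) (hW : IsComod k H ρW) :
    (∀ f : V →ₗ[k] W ⊗[k] H,
      IsComodHom k H ρV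
        (tensorCoact k H ρW (Coalgebra.comul (R := k) (A := H))) f →
      (∀ v : V, f v ∈ LinearMap.range
        ((LinearMap.range (ι : A →ₗ[k] H)).subtype.lTensor W)) →
      IsComodHom k B (cores k H (π : H →ₗ[k] B) ρV)
        (cores k H (π : H →ₗ[k] B) ρW) (counitProj k f)) ∧
    (∀ g : V →ₗ[k] W,
      IsComodHom k B (cores k H (π : H →ₗ[k] B) ρV)
        (cores k H (π : H →ₗ[k] B) ρW) g →
      ∃! f : V →ₗ[k] W ⊗[k] H,
        (IsComodHom k H ρV
          (tensorCoact k H ρW (Coalgebra.comul (R := k) (A := H))) f ∧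
        ∀ v : V, f v ∈ LinearMap.range
          ((LinearMap.range (ι : A →ₗ[k] H)).subtype.lTensor W)) ∧
        counitProj k f = g) := by
  rw [← quotientSpaceRight_eq_range hexactA hexactB hcssB]
  refine ⟨fun f hf => (mem_range_iff_isComodHom_cores hV hW hf).1, fun g hg => ?_⟩
  obtain ⟨f, ⟨hf, rfl⟩, unique⟩ := existsUnique_isComodHom_tensorCoact hV hW g
  exact ⟨f, ⟨⟨hf, (mem_range_iff_isComodHom_cores hV hW hf).2 hg⟩, rfl⟩,
    fun f' hf' => unique f' ⟨hf'.1.1, hf'.2⟩⟩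

open QG in
/-- For an exact sequence `k → A → H → B → k` of cosemisimple
Hopf algebras and right `H`-comodules `V`, `W`, the canonical map
`f ↦ (id ⊗ ε) ∘ f` is a bijection `hom^H(V, W ⊗ A) ≅ hom^B(V, W)` (a natural
isomorphism); here `W ⊗ A` is realized as the subcomodule `W ⊗ A ⊆ W ⊗ H` of
the tensor-product `H`-comodule `W ⊗ H`. -/
theorem statement_10 (k : Type u) [Field k] [IsAlgClosed k]
    (A H B : Type u) [Ring A] [HopfAlgebra k A] [Ring H] [HopfAlgebra k H]
    [Ring B] [HopfAlgebra k B]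
    (ι : A →ₐc[k] H) (π : H →ₐc[k] B)
    (hinj : Function.Injective ι) (hsurj : Function.Surjective π)
    (hexactA : LinearMap.range (ι : A →ₗ[k] H) =
      quotientSpaceLeft k H (π : H →ₗ[k] B))
    (hexactB : LinearMap.ker (π : H →ₗ[k] B) =
      leftIdealGen k (LinearMap.range (ι : A →ₗ[k] H) ⊓
        LinearMap.ker (Coalgebra.counit (R := k) (A := H))))
    (hcssA : IsCosemisimple k A) (hcssH : IsCosemisimple k H)
    (hcssB : IsCosemisimple k B)
    (V W : Type u) [AddCommGroup V] [Module k V] [AddCommGroup W] [Module k W]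
    (ρV : V →ₗ[k] V ⊗[k] H) (ρW : W →ₗ[k] W ⊗[k] H)
    (hV : IsComod k H ρV) (hW : IsComod k H ρW) :
    (∀ f : V →ₗ[k] W ⊗[k] H,
      IsComodHom k H ρV
        (tensorCoact k H ρW (Coalgebra.comul (R := k) (A := H))) f →
      (∀ v : V, f v ∈ LinearMap.range
        ((LinearMap.range (ι : A →ₗ[k] H)).subtype.lTensor W)) →
      IsComodHom k B (cores k H (π : H →ₗ[k] B) ρV)
        (cores k H (π : H →ₗ[k] B) ρW) (counitProj k f)) ∧
    (∀ g : V →ₗ[k] W,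
      IsComodHom k B (cores k H (π : H →ₗ[k] B) ρV)
        (cores k H (π : H →ₗ[k] B) ρW) g →
      ∃! f : V →ₗ[k] W ⊗[k] H,
        (IsComodHom k H ρV
          (tensorCoact k H ρW (Coalgebra.comul (R := k) (A := H))) f ∧
        ∀ v : V, f v ∈ LinearMap.range
          ((LinearMap.range (ι : A →ₗ[k] H)).subtype.lTensor W)) ∧
        counitProj k f = g) :=
  statement_10_general k A H B ι π hexactA hexactB hcssB V W ρV ρW hV hW
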